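/- Let E be a real or complex Hilbert space, let U : ℝ → U(E) be a strongly continuous one-parameter group of unitary operators, and let E₊ and E₊' be closed subspaces of E such that both (E, E₊, U) and (E, E₊', U) are regular one-parameter groups. Then (E, E₊, U) and (E, E₊', U) are equivalent, i.e. there exists a unitary operator ψ : E → E with ψ(E₊) = E₊' and ψ ∘ U_t = U_t ∘ ψ for all t ∈ ℝ. -/

import Mathlib

open MeasureTheory

/-- `(E, E₊, U)` is a regular one-parameter group: `U` is a (strongly continuous)
one-parameter group of unitaries with `U_t E₊ ⊆ E₊` for `t ≥ 0`,
`⋂_{t∈ℝ} U_t E₊ = {0}` and `⋃_{t∈ℝ} U_t E₊` dense in `E`. -/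
def IsROPG {𝕜 E : Type*} [RCLike 𝕜] [NormedAddCommGroup E] [InnerProductSpace 𝕜 E]
    (Ep : Submodule 𝕜 E) (U : ℝ → (E ≃ₗᵢ[𝕜] E)) : Prop :=
  (∀ t : ℝ, 0 ≤ t → ∀ v ∈ Ep, U t v ∈ Ep) ∧
  (⋂ t : ℝ, (U t) '' (Ep : Set E)) = {(0 : E)} ∧
  Dense (⋃ t : ℝ, (U t) '' (Ep : Set E))


section Analytic
open Set

variable {𝕜 E : Type*} [RCLike 𝕜] [NormedAddCommGroup E] [InnerProductSpace 𝕜 E] [CompleteSpace E]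

theorem exists_resolvent [NormedSpace ℝ E] [IsScalarTower ℝ 𝕜 E]
    (U : ℝ → (E ≃ₗᵢ[𝕜] E))
    (hUadd : ∀ s t : ℝ, ∀ v : E, U (s + t) v = U s (U t v))
    (hUcont : ∀ v : E, Continuous fun t : ℝ => U t v) :
    ∃ R : E →L[𝕜] E,
      (∀ y s, HasDerivAt (fun s => U s (R y)) (U s (R y) - U s y) s) ∧
      (∀ S : E →L[𝕜] E, (∀ t y, S (U t y) = U t (S y)) → ∀ y, S (R y) = R (S y)) ∧
      (∀ K : Submodule 𝕜 E, IsClosed (K : Set E) → (∀ t, 0 ≤ t → ∀ v ∈ K, U t v ∈ K) →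
        ∀ v ∈ K, R v ∈ K) := by
  have hcont : ∀ y : E, Continuous fun t : ℝ => Real.exp (-t) • U t y := fun y =>
    (Real.continuous_exp.comp continuous_neg).smul (hUcont y)
  have hintg : ∀ (y : E) (a : ℝ), IntegrableOn (fun t : ℝ => Real.exp (-t) • U t y) (Ioi a) := by
    intro y a
    refine Integrable.mono' ((integrableOn_exp_neg_Ioi a).mul_const ‖y‖)
      (hcont y).aestronglyMeasurable (Filter.Eventually.of_forall fun t => ?_)
    rw [norm_smul, LinearIsometryEquiv.norm_map, Real.norm_of_nonneg (Real.exp_pos _).le]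
  let R0 : E →ₗ[𝕜] E :=
    { toFun := fun y => ∫ t in Ioi (0:ℝ), Real.exp (-t) • U t y
      map_add' := fun x y => by
        simp only [map_add, smul_add]
        exact integral_add (hintg x 0) (hintg y 0)
      map_smul' := fun c y => by
        simp only [map_smul, RingHom.id_apply]
        rw [← integral_smul]
        congr 1
        ext t
        rw [smul_comm] }
  have hR0 : ∀ y, ‖R0 y‖ ≤ 1 * ‖y‖ := by
    intro y
    have h1 : ‖R0 y‖ ≤ ∫ t in Ioi (0:ℝ), Real.exp (-t) * ‖y‖ := by
      refine norm_integral_le_of_norm_le ((integrableOn_exp_neg_Ioi 0).mul_const ‖y‖)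
        (Filter.Eventually.of_forall fun t => ?_)
      rw [norm_smul, LinearIsometryEquiv.norm_map, Real.norm_of_nonneg (Real.exp_pos _).le]
    rwa [integral_mul_const, integral_exp_neg_Ioi_zero] at h1
  have hSR : ∀ (S : E →L[𝕜] E) y,
      S (∫ t in Ioi (0:ℝ), Real.exp (-t) • U t y) = ∫ t in Ioi (0:ℝ), Real.exp (-t) • S (U t y) := by
    intro S y
    rw [← ContinuousLinearMap.integral_comp_comm S (hintg y 0)]
    congr 1
    ext t
    exact S.map_smul_of_tower _ _
  refine ⟨R0.mkContinuous 1 hR0, ?_, ?_, ?_⟩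
  · intro y s
    have key : ∀ s, U s (R0 y) = Real.exp s •
        ((∫ t in Ioi (0:ℝ), Real.exp (-t) • U t y) - ∫ t in (0:ℝ)..s, Real.exp (-t) • U t y) := by
      intro s
      have h1 := intervalIntegral.integral_Ioi_sub_Ioi' (hintg y 0) (hintg y s)
      rw [← h1, sub_sub_cancel]
      have h2 : U s (R0 y) = ∫ t in Ioi (0:ℝ), Real.exp (-t) • U s (U t y) :=
        hSR (U s).toContinuousLinearEquiv.toContinuousLinearMap y
      rw [h2, ← integral_smul]
      have h3 := (measurePreserving_add_left volume s).setIntegral_preimage_emb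
        (measurableEmbedding_addLeft s) (fun t => Real.exp s • Real.exp (-t) • U t y) (Ioi s)
      rw [← h3]
      simp only [preimage_const_add_Ioi, sub_self]
      congr 1
      ext t
      rw [hUadd, smul_smul, ← Real.exp_add]
      congr 2
      ring
    have hd : HasDerivAt (fun s => Real.exp s •
        ((∫ t in Ioi (0:ℝ), Real.exp (-t) • U t y) - ∫ t in (0:ℝ)..s, Real.exp (-t) • U t y)) _ s :=
      (Real.hasDerivAt_exp s).smul
        ((intervalIntegral.integral_hasDerivAt_right ((hcont y).intervalIntegrable _ _)
          (hcont y).aestronglyMeasurable.stronglyMeasurableAtFilter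
          (hcont y).continuousAt).const_sub _)
    simp only [LinearMap.mkContinuous_apply]
    have he : (fun s => U s (R0 y)) = _ := funext key
    rw [he]
    refine hd.congr_deriv ?_
    rw [key s, smul_neg, smul_smul, ← Real.exp_add, add_neg_cancel, Real.exp_zero, one_smul]
    abel
  · intro S hS y
    simp only [LinearMap.mkContinuous_apply]
    refine (hSR S y).trans ?_
    simp only [hS]
    rfl
  · intro K hK hinv v hv
    simp only [LinearMap.mkContinuous_apply]
    have : CompleteSpace K := hK.completeSpace_coe
    rw [← K.orthogonal_orthogonal, Submodule.mem_orthogonal]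
    intro z hz
    have h1 : inner 𝕜 z (R0 v) = ∫ t in Ioi (0:ℝ), (innerSL 𝕜 z) (Real.exp (-t) • U t v) :=
      (ContinuousLinearMap.integral_comp_comm (innerSL 𝕜 z) (hintg v 0)).symm
    rw [h1]
    refine setIntegral_eq_zero_of_forall_eq_zero fun t ht => ?_
    rw [ContinuousLinearMap.map_smul_of_tower, innerSL_apply_apply,
      Submodule.inner_left_of_mem_orthogonal (hinv t (le_of_lt ht) v hv) hz, smul_zero]

theorem exists_cogenerator (U : ℝ → (E ≃ₗᵢ[𝕜] E))
    (hU0 : ∀ v : E, U 0 v = v)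
    (hUadd : ∀ s t : ℝ, ∀ v : E, U (s + t) v = U s (U t v))
    (hUcont : ∀ v : E, Continuous fun t : ℝ => U t v) :
    ∃ V : E ≃ₗᵢ[𝕜] E,
      (∀ S : E →L[𝕜] E, (∀ y, S (V y) = V (S y)) → ∀ t y, S (U t y) = U t (S y)) ∧
      (∀ K : Submodule 𝕜 E, IsClosed (K : Set E) → (∀ t, 0 ≤ t → ∀ v ∈ K, U t v ∈ K) →
        ∀ v ∈ K, V v ∈ K) := by
  let _ : InnerProductSpace ℝ E := InnerProductSpace.rclikeToReal 𝕜 E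
  have : IsScalarTower ℝ 𝕜 E := inferInstance
  obtain ⟨R, hder, hcomm, hK⟩ := exists_resolvent U hUadd hUcont
  have hUcomm : ∀ s t v, U s (U t v) = U t (U s v) := fun s t v => by
    rw [← hUadd, add_comm, hUadd]
  have hRU : ∀ t y, R (U t y) = U t (R y) := fun t y =>
    (hcomm (U t).toContinuousLinearEquiv.toContinuousLinearMap (fun s y => hUcomm t s y) y).symm
  -- the basic identity
  have hid : ∀ y w, inner 𝕜 (R y) (R w - w) + inner 𝕜 (R y - y) (R w) = 0 := by
    intro y w
    have h1 := (hder y 0).inner 𝕜 (hder w 0)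
    simp only [LinearIsometryEquiv.inner_map_map, hU0] at h1
    exact h1.unique (hasDerivAt_const _ _)
  have hUinv : ∀ t v, U (-t) (U t v) = v := fun t v => by
    rw [← hUadd, neg_add_cancel, hU0]
  let A : E →L[𝕜] E := ContinuousLinearMap.adjoint R
  have hAU : ∀ t y, A (U t y) = U t (A y) := by
    intro t y
    refine ext_inner_right 𝕜 fun z => ?_
    rw [ContinuousLinearMap.adjoint_inner_left]
    have h1 : R z = U t (U (-t) (R z)) := by
      have := hUinv (-t) (R z); rw [neg_neg] at this; exact this.symm
    have h2 : z = U t (U (-t) z) := by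
      have := hUinv (-t) z; rw [neg_neg] at this; exact this.symm
    conv_rhs => rw [h2]
    rw [h1, LinearIsometryEquiv.inner_map_map, LinearIsometryEquiv.inner_map_map,
      ContinuousLinearMap.adjoint_inner_left, hRU]
  have hAR : ∀ y, A (R y) = R (A y) := hcomm A hAU
  have hAid : ∀ y, A (R y) + A (R y) = A y + R y := by
    intro y
    refine ext_inner_right 𝕜 fun z => ?_
    have := hid y z
    simp only [inner_sub_left, inner_sub_right] at this
    rw [inner_add_left, inner_add_left, ContinuousLinearMap.adjoint_inner_left,
      ContinuousLinearMap.adjoint_inner_left]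
    linear_combination this
  -- `R` has dense range
  have hRinj : ∀ z, R z = 0 → z = 0 := by
    intro z hz
    have h1 := hder z 0
    simp only [hz, map_zero, hU0, zero_sub] at h1
    exact neg_eq_zero.1 (h1.unique (hasDerivAt_const _ _))
  have hdense : ∀ z, (∀ w, inner 𝕜 z (R w) = 0) → z = 0 := by
    intro z hz
    have hA0 : A z = 0 := by
      refine ext_inner_right 𝕜 fun w => ?_
      rw [ContinuousLinearMap.adjoint_inner_left, hz, inner_zero_left]
    apply hRinj
    have := hAid z
    rw [hAR, hA0, map_zero, add_zero, zero_add] at this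
    exact this.symm
  have hdenseR : Dense (Set.range R) := by
    have : R.range.topologicalClosure = ⊤ := by
      rw [Submodule.topologicalClosure_eq_top_iff, Submodule.eq_bot_iff]
      intro z hz
      apply hdense
      intro w
      exact Submodule.inner_left_of_mem_orthogonal (K := R.range) ⟨w, rfl⟩ hz
    have h2 := (Submodule.dense_iff_topologicalClosure_eq_top).2 this
    exact h2
  let V0 : E →ₗ[𝕜] E := (ContinuousLinearMap.id 𝕜 E - R - R : E →L[𝕜] E)
  have hV0 : ∀ y, V0 y = y - R y - R y := fun y => rfl
  let V1 : E →ₗᵢ[𝕜] E := ⟨V0, fun y => by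
    have h := hid y y
    have h2 : inner 𝕜 (V0 y) (V0 y) = inner 𝕜 y y := by
      rw [hV0]
      simp only [inner_sub_left, inner_sub_right] at h ⊢
      linear_combination 2 * h
    rw [inner_self_eq_norm_sq_to_K, inner_self_eq_norm_sq_to_K] at h2
    have h3 : ‖V0 y‖ ^ 2 = ‖y‖ ^ 2 := by exact_mod_cast h2
    exact (sq_eq_sq₀ (norm_nonneg _) (norm_nonneg _)).1 h3⟩
  have hsurj : Function.Surjective V1 := by
    intro y
    refine ⟨y - A y - A y, ?_⟩
    change V0 _ = y
    rw [hV0]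
    simp only [map_sub, ← hAR]
    have := hAid y
    have h2 : y - A y - A y - (R y - A (R y) - A (R y)) - (R y - A (R y) - A (R y))
      = y - (A y + R y) - (A y + R y) + (A (R y) + A (R y)) + (A (R y) + A (R y)) := by abel
    rw [h2, this]; abel
  refine ⟨LinearIsometryEquiv.ofSurjective V1 hsurj, ?_, ?_⟩
  · intro S hS
    have hS' : ∀ y, S (R y) = R (S y) := by
      intro y
      have h := hS y
      change S (V0 y) = V0 (S y) at h
      rw [hV0, hV0, map_sub, map_sub] at h
      have h2 : (2:𝕜) • S (R y) = (2:𝕜) • R (S y) := by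
        rw [two_smul, two_smul]
        have := congrArg (fun z => S y - z) h
        have h3 : S y - (S y - S (R y) - S (R y)) = S y - (S y - R (S y) - R (S y)) := this
        convert h3 using 1 <;> abel
      exact smul_right_injective E (two_ne_zero) h2
    -- derivative of `⟪S U_s R y, U_s R w⟫`
    have hconst : ∀ y w s, inner 𝕜 (S (U s (R y))) (U s (R w)) = inner 𝕜 (S (R y)) (R w) := by
      intro y w s
      have hd : ∀ s, HasDerivAt (fun s => inner 𝕜 (S (U s (R y))) (U s (R w))) 0 s := by
        intro s
        have h1 : HasDerivAt (fun s => S (U s (R y))) (S (U s (R y) - U s y)) s :=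
          (S.restrictScalars ℝ).hasFDerivAt.comp_hasDerivAt s (hder y s)
        refine (h1.inner 𝕜 (hder w s)).congr_deriv ?_
        rw [← hRU, ← hRU, map_sub, hS']
        have := hid (S (U s y)) (U s w)
        exact this
      have := is_const_of_deriv_eq_zero (fun s => (hd s).differentiableAt) (fun s => (hd s).deriv) s 0
      simpa only [hU0] using this
    intro t
    have h1 : ∀ y, S (U t (R y)) = U t (S (R y)) := by
      intro y
      rw [← sub_eq_zero]
      have h2 : U t (U (-t) (S (U t (R y))) - S (R y)) = S (U t (R y)) - U t (S (R y)) := by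
        rw [map_sub, ← hUadd, add_neg_cancel, hU0]
      rw [← h2]
      have h3 : U (-t) (S (U t (R y))) - S (R y) = 0 := by
        apply hdense
        intro w
        rw [inner_sub_left, ← hconst y w t, sub_eq_zero, ← (U t).inner_map_map, ← hUadd,
          add_neg_cancel, hU0]
      rw [h3, map_zero]
    have h2 : (fun y => S (U t y)) = fun y => U t (S y) := by
      refine Continuous.ext_on hdenseR (by fun_prop) (by fun_prop) ?_
      rintro _ ⟨y, rfl⟩
      exact h1 y
    exact fun y => congrFun h2 y
  · intro K hKc hinv v hv
    change V0 v ∈ K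
    rw [hV0]
    have := hK K hKc hinv v hv
    exact K.sub_mem (K.sub_mem hv this) this

end Analytic

universe u

section Discrete

variable {𝕜 : Type*} {E : Type u} [RCLike 𝕜] [NormedAddCommGroup E] [InnerProductSpace 𝕜 E]
  [CompleteSpace E]

theorem exists_shift_basis (V : E ≃ₗᵢ[𝕜] E) (K : Submodule 𝕜 E) (hK : IsClosed (K : Set E))
    (hVK : ∀ v ∈ K, V v ∈ K)
    (hinter : ∀ x, (∀ n : ℤ, (V ^ n) x ∈ K) → x = 0)
    (hdense : ∀ z, (∀ n : ℤ, ∀ k ∈ K, inner 𝕜 ((V ^ n) k) z = 0) → z = 0) :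
    ∃ (ι : Type u) (b : HilbertBasis (ℤ × ι) 𝕜 E),
      (∀ n i, V (b (n, i)) = b (n + 1, i)) ∧
      ∀ x, x ∈ K ↔ ∀ n : ℤ, n < 0 → ∀ i, inner 𝕜 (b (n, i)) x = 0 := by
  have : CompleteSpace K := hK.completeSpace_coe
  have zadd : ∀ (m n : ℤ) x, (V ^ (m + n)) x = (V ^ m) ((V ^ n) x) := fun m n x => by
    rw [zpow_add]; rfl
  have zinv : ∀ (n : ℤ) x, (V ^ n) ((V ^ (-n)) x) = x := fun n x => by
    rw [← zadd, add_neg_cancel, zpow_zero]; rfl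
  have zinner : ∀ (n : ℤ) x y, inner 𝕜 ((V ^ n) x) y = inner 𝕜 x ((V ^ (-n)) y) := by
    intro n x y
    rw [← (V ^ n).inner_map_map x, zinv]
  have hpow : ∀ (n : ℤ), 0 ≤ n → ∀ v ∈ K, (V ^ n) v ∈ K := by
    intro n hn
    induction n, hn using Int.leInduction with
    | base => intro v hv; simpa using hv
    | succ n hn ih => 
      intro v hv
      rw [zadd, zpow_one]
      exact ih _ (hVK v hv)
  -- the wandering subspace
  let M : Submodule 𝕜 E := K ⊓ (K.map (V.toLinearEquiv : E →ₗ[𝕜] E))ᗮ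
  have hM : ∀ x, x ∈ M ↔ x ∈ K ∧ ∀ k ∈ K, inner 𝕜 (V k) x = 0 := by
    intro x
    simp only [M, Submodule.mem_inf, Submodule.mem_orthogonal, Submodule.mem_map]
    refine and_congr Iff.rfl ⟨fun h k hk => h _ ⟨k, hk, rfl⟩, ?_⟩
    rintro h _ ⟨k, hk, rfl⟩
    exact h k hk
  have hMc : IsClosed (M : Set E) := hK.inter (Submodule.isClosed_orthogonal _)
  have : CompleteSpace M := hMc.completeSpace_coe
  obtain ⟨ι, e, -⟩ := exists_hilbertBasis 𝕜 M
  have heM : ∀ i, (e i : E) ∈ M := fun i => (e i).2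
  have heort : ∀ (n : ℤ), 0 < n → ∀ i, ∀ k ∈ K, inner 𝕜 ((V ^ n) k) (e i : E) = 0 := by
    intro n hn i k hk
    have : n = 1 + (n - 1) := by ring
    rw [this, zadd, zpow_one]
    exact ((hM _).1 (heM i)).2 _ (hpow _ (by lia) k hk)
  let v : ℤ × ι → E := fun p => (V ^ p.1) (e p.2 : E)
  have hv : Orthonormal 𝕜 v := by
    refine ⟨fun p => ?_, ?_⟩
    · simp only [v, LinearIsometryEquiv.norm_map]
      exact e.orthonormal.1 p.2
    · have key : ∀ (m n : ℤ) i j, m < n → inner 𝕜 (v (n, i)) (v (m, j)) = 0 := by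
        intro m n i j h
        simp only [v]
        have : n = m + (n - m) := by ring
        rw [this, zadd, LinearIsometryEquiv.inner_map_map]
        exact heort _ (by lia) _ _ ((hM _).1 (heM i)).1
      rintro ⟨m, i⟩ ⟨n, j⟩ hne
      rcases lt_trichotomy m n with h | h | h
      · exact inner_eq_zero_symm.1 (key _ _ _ _ h)
      · subst h
        have hij : i ≠ j := fun h => hne (by rw [h])
        simp only [v, LinearIsometryEquiv.inner_map_map]
        exact e.orthonormal.2 hij
      · exact key _ _ _ _ h
  have htot : ∀ z, (∀ p, inner 𝕜 (v p) z = 0) → z = 0 := by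
    intro z hz
    -- `z` is orthogonal to `V ^ n M`
    have hzM : ∀ (n : ℤ), ∀ m ∈ M, inner 𝕜 m ((V ^ (-n)) z) = 0 := by
      intro n m hm
      have h1 : ∀ i, inner 𝕜 (e i) (M.orthogonalProjectionOnto ((V ^ (-n)) z)) = 0 := by
        intro i
        rw [Submodule.inner_orthogonalProjectionOnto_eq_of_mem_left]
        rw [← zinner]
        exact hz (n, i)
      have h2 : M.orthogonalProjectionOnto ((V ^ (-n)) z) = 0 := by
        have h3 := e.hasSum_repr (M.orthogonalProjectionOnto ((V ^ (-n)) z))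
        simp only [e.repr_apply_apply, h1, zero_smul] at h3
        exact h3.unique hasSum_zero
      have h4 := Submodule.inner_orthogonalProjectionOnto_eq_of_mem_left (K := M) ⟨m, hm⟩ ((V ^ (-n)) z)
      rw [h2] at h4
      simpa using h4.symm
    -- projections
    let P := K.starProjection
    have hPK : ∀ x, P x ∈ K := fun x => Submodule.starProjection_apply_mem K x
    have hP : ∀ x, ∀ k ∈ K, inner 𝕜 k (P x) = inner 𝕜 k x := by
      intro x k hk
      have := Submodule.starProjection_inner_eq_zero (K := K) x k hk
      rw [← inner_eq_zero_symm, inner_sub_right, sub_eq_zero] at this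
      exact this.symm
    have hstep : ∀ y, (∀ m ∈ M, inner 𝕜 m y = 0) → P y = V (P (V⁻¹ y)) := by
      intro y hy
      have hVV : ∀ x y, inner 𝕜 (V x) y = inner 𝕜 x (V⁻¹ y) := fun x y => by
        simpa using zinner 1 x y
      have hdM : P y - V (P (V⁻¹ y)) ∈ M := by
        rw [hM]
        refine ⟨K.sub_mem (hPK _) (hVK _ (hPK _)), fun k hk => ?_⟩
        rw [inner_sub_right, hP _ _ (hVK _ hk), V.inner_map_map, hP _ _ hk, hVV, sub_self]
      rw [← sub_eq_zero, ← inner_self_eq_zero (𝕜 := 𝕜)]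
      have h1 := ((hM _).1 hdM).2 _ (hPK (V⁻¹ y))
      have h2 := hP y _ ((hM _).1 hdM).1
      rw [hy _ hdM] at h2
      rw [inner_sub_right, h2, inner_eq_zero_symm.1 h1, sub_zero]
    have hstep' : ∀ n : ℤ, (V ^ n) (P ((V ^ (-n)) z)) = (V ^ (n + 1)) (P ((V ^ (-(n + 1))) z)) := by
      intro n
      rw [hstep _ (hzM n), zadd n 1, zpow_one]
      have : -(n+1) = -1 + -n := by ring
      rw [this, zadd, zpow_neg_one]
    have hall : ∀ n : ℤ, (V ^ n) (P ((V ^ (-n)) z)) = P z := by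
      intro n
      induction n using Int.induction_on with
      | zero => simp
      | succ n ih => rw [← hstep', ih]
      | pred n ih => rw [hstep', sub_add_cancel, ih]
    have hPz : P z = 0 := by
      apply hinter
      intro n
      have h1 := zinv n (P ((V ^ (-(-n))) z))
      rw [← hall (-n), h1]
      exact hPK _
    apply hdense
    intro n k hk
    rw [zinner, ← hP _ _ hk]
    have : P ((V ^ (-n)) z) = 0 := by
      have := hall n
      rw [hPz] at this
      simpa using this
    rw [this, inner_zero_right]
  let b := HilbertBasis.mkOfOrthogonalEqBot hv (by
    rw [Submodule.eq_bot_iff]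
    intro z hz
    exact htot z fun p => (Submodule.mem_orthogonal _ _).1 hz _ (Submodule.subset_span ⟨p, rfl⟩))
  have hb : ∀ p, b p = v p := fun p => by simp [b]
  refine ⟨ι, b, ?_, ?_⟩
  · intro n i
    rw [hb, hb]
    simp only [v]
    rw [add_comm, zadd, zpow_one]
  · intro x
    constructor
    · intro hx n hn i
      rw [hb]
      simp only [v]
      rw [zinner, inner_eq_zero_symm]
      exact heort _ (by lia) _ _ hx
    · intro h
      refine hK.mem_of_tendsto (b.hasSum_repr x) (Filter.Eventually.of_forall fun s => ?_)
      refine K.sum_mem fun p _ => ?_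
      rw [b.repr_apply_apply]
      rcases lt_or_ge p.1 0 with hp | hp
      · rw [h p.1 hp p.2, zero_smul]; exact K.zero_mem
      · rw [hb]
        exact K.smul_mem _ (hpow _ hp _ ((hM _).1 (heM _)).1)

theorem basis_sum {α : Type*} (b : HilbertBasis α 𝕜 E) (x : E) :
    HasSum (fun p => ‖inner 𝕜 (b p) x‖ ^ 2) (‖x‖ ^ 2) := by
  have h := b.hasSum_inner_mul_inner x x
  have h2 := RCLike.hasSum_re 𝕜 h
  rw [inner_self_eq_norm_sq] at h2
  convert h2 using 1
  ext p
  rw [← inner_conj_symm, RCLike.mul_conj, RCLike.norm_conj]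
  norm_cast

theorem basis_shift {α : Type*} (V : E ≃ₗᵢ[𝕜] E) (b : HilbertBasis (ℤ × α) 𝕜 E)
    (hb : ∀ n i, V (b (n, i)) = b (n + 1, i)) (m n : ℤ) (i : α) :
    (V ^ m) (b (n, i)) = b (n + m, i) := by
  have zadd : ∀ (m n : ℤ) x, (V ^ (m + n)) x = (V ^ m) ((V ^ n) x) := fun m n x => by
    rw [zpow_add]; rfl
  induction m using Int.induction_on with
  | zero => simp
  | succ m ih => rw [add_comm (m : ℤ) 1, zadd, ih, zpow_one, hb]; congr 2; ring
  | pred m ih =>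
    apply V.injective
    have h1 := zadd 1 (-(m : ℤ) - 1) (b (n, i))
    rw [zpow_one] at h1
    rw [← h1, hb, add_sub_cancel, ih]
    congr 2; ring

theorem basis_inner {ι κ : Type u} (V : E ≃ₗᵢ[𝕜] E) (b : HilbertBasis (ℤ × ι) 𝕜 E)
    (b' : HilbertBasis (ℤ × κ) 𝕜 E)
    (hb : ∀ n i, V (b (n, i)) = b (n + 1, i)) (hb' : ∀ n i, V (b' (n, i)) = b' (n + 1, i))
    (n : ℤ) (i : ι) (j : κ) :
    inner 𝕜 (b' (n, j)) (b (0, i)) = inner 𝕜 (b' (0, j)) (b (-n, i)) := by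
  rw [← (V ^ (-n)).inner_map_map, basis_shift V b hb, basis_shift V b' hb']
  simp

theorem enn_card {ι κ : Type u} (V : E ≃ₗᵢ[𝕜] E) (b : HilbertBasis (ℤ × ι) 𝕜 E)
    (b' : HilbertBasis (ℤ × κ) 𝕜 E)
    (hb : ∀ n i, V (b (n, i)) = b (n + 1, i)) (hb' : ∀ n i, V (b' (n, i)) = b' (n + 1, i)) :
    ENat.card ι = ENat.card κ := by
  have key : ∀ {α β : Type u} (c : HilbertBasis (ℤ × α) 𝕜 E) (d : HilbertBasis (ℤ × β) 𝕜 E),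
      ∑' (i : α) (j : β) (n : ℤ), ENNReal.ofReal (‖inner 𝕜 (d (n, j)) (c (0, i))‖ ^ 2)
        = (ENat.card α : ENNReal) := by
    intro α β c d
    rw [← ENNReal.tsum_one]
    refine tsum_congr fun i => ?_
    have h := basis_sum d (c (0, i))
    rw [c.orthonormal.1, one_pow] at h
    have h2 := ENNReal.ofReal_tsum_of_nonneg (fun p => by positivity) h.summable
    rw [h.tsum_eq, ENNReal.ofReal_one] at h2
    rw [h2, ENNReal.tsum_comm]
    exact (ENNReal.tsum_prod
      (f := fun n j => ENNReal.ofReal (‖inner 𝕜 (d (n, j)) (c (0, i))‖ ^ 2))).symm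
  have h1 := key b b'
  have h2 := key b' b
  have h3 : (ENat.card ι : ENNReal) = (ENat.card κ : ENNReal) := by
    rw [← h1, ← h2, ENNReal.tsum_comm]
    refine tsum_congr fun j => tsum_congr fun i => ?_
    rw [← (Equiv.neg ℤ).tsum_eq]
    refine tsum_congr fun n => ?_
    rw [basis_inner V b b' hb hb', Equiv.neg_apply, neg_neg, norm_inner_symm]
  exact_mod_cast h3

theorem basis_card_le {ι κ : Type u} [Infinite κ] (b : HilbertBasis (ℤ × ι) 𝕜 E)
    (b' : HilbertBasis (ℤ × κ) 𝕜 E) : Cardinal.mk ι ≤ Cardinal.mk κ := by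
  let T : ℤ × κ → Set ι := fun p => {i | inner 𝕜 (b (0, i)) (b' p) ≠ 0}
  have hT : ∀ p, (T p).Countable := by
    intro p
    have h := (basis_sum b (b' p)).summable.countable_support
    refine (h.preimage (f := fun i : ι => ((0 : ℤ), i)) (Prod.mk_right_injective 0)).mono ?_
    intro i hi
    simpa [T] using hi
  have hU : (⋃ p, T p) = Set.univ := by
    rw [Set.eq_univ_iff_forall]
    intro i
    by_contra hi
    simp only [Set.mem_iUnion, not_exists, T, Set.mem_ofPred_eq, not_not] at hi
    have h := basis_sum b' (b (0, i))
    have h0 : ∀ p, inner 𝕜 (b' p) (b (0, i)) = 0 := fun p => inner_eq_zero_symm.1 (hi p)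
    simp only [h0, b.orthonormal.1, norm_zero] at h
    have := h.unique (a₂ := (0 : ℝ)) (by simpa using hasSum_zero)
    norm_num at this
  have h1 : Cardinal.mk ι ≤ Cardinal.mk (ℤ × κ) * Cardinal.aleph0 := by
    rw [← Cardinal.mk_univ, ← hU]
    refine (Cardinal.mk_iUnion_le T).trans ?_
    gcongr
    exact ciSup_le' fun p => Cardinal.le_aleph0_iff_set_countable.2 (hT p)
  refine h1.trans ?_
  have hk := Cardinal.aleph0_le_mk κ
  simp only [Cardinal.mk_prod, Cardinal.lift_uzero, Cardinal.mk_denumerable,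
    Cardinal.lift_aleph0]
  rw [Cardinal.aleph0_mul_eq hk, Cardinal.mul_aleph0_eq hk]

theorem basis_equiv {ι κ : Type u} (V : E ≃ₗᵢ[𝕜] E) (b : HilbertBasis (ℤ × ι) 𝕜 E)
    (b' : HilbertBasis (ℤ × κ) 𝕜 E)
    (hb : ∀ n i, V (b (n, i)) = b (n + 1, i)) (hb' : ∀ n i, V (b' (n, i)) = b' (n + 1, i)) :
    Nonempty (ι ≃ κ) := by
  have h := enn_card V b b' hb hb'
  rcases finite_or_infinite ι with hi | hi
  · have hk : Finite κ := by
      rw [← ENat.card_lt_top, ← h, ENat.card_lt_top]; exact hi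
    rw [ENat.card_eq_coe_natCard, ENat.card_eq_coe_natCard] at h
    exact Finite.card_eq.1 (by exact_mod_cast h)
  · have hk : Infinite κ := by
      rw [← ENat.card_eq_top, ← h, ENat.card_eq_top]; exact hi
    exact Cardinal.eq.1 (le_antisymm (basis_card_le b b') (basis_card_le b' b))

theorem exists_intertwiner (V : E ≃ₗᵢ[𝕜] E) (K K' : Submodule 𝕜 E) {ι κ : Type u}
    (b : HilbertBasis (ℤ × ι) 𝕜 E) (b' : HilbertBasis (ℤ × κ) 𝕜 E)
    (hb : ∀ n i, V (b (n, i)) = b (n + 1, i)) (hb' : ∀ n i, V (b' (n, i)) = b' (n + 1, i))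
    (hK : ∀ x, x ∈ K ↔ ∀ n : ℤ, n < 0 → ∀ i, inner 𝕜 (b (n, i)) x = 0)
    (hK' : ∀ x, x ∈ K' ↔ ∀ n : ℤ, n < 0 → ∀ i, inner 𝕜 (b' (n, i)) x = 0) :
    ∃ ψ : E ≃ₗᵢ[𝕜] E, ψ '' (K : Set E) = (K' : Set E) ∧ ∀ v, ψ (V v) = V (ψ v) := by
  obtain ⟨σ⟩ := basis_equiv V b b' hb hb'
  let τ : ℤ × ι ≃ ℤ × κ := (Equiv.refl ℤ).prodCongr σ
  have hort : Orthonormal 𝕜 (fun p => b' (τ p)) := b'.orthonormal.comp _ τ.injective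
  let c : HilbertBasis (ℤ × ι) 𝕜 E := HilbertBasis.mk hort (by
    have : Set.range (fun p => b' (τ p)) = Set.range b' := τ.surjective.range_comp b'
    rw [this, b'.dense_span])
  have hc : ∀ n i, c (n, i) = b' (n, σ i) := fun n i => by
    simp [c, τ]
  let ψ : E ≃ₗᵢ[𝕜] E := b.repr.trans c.repr.symm
  have hψ : ∀ p, ψ (b p) = c p := by
    classical
    intro p
    simp only [ψ, LinearIsometryEquiv.trans_apply, b.repr_self, c.repr_symm_single]
  have hmem : ∀ x, ψ x ∈ K' ↔ x ∈ K := by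
    intro x
    rw [hK, hK']
    refine forall_congr' fun n => forall_congr' fun _ => ?_
    rw [← σ.forall_congr_right]
    refine forall_congr' fun i => ?_
    rw [← hc, ← hψ, ψ.inner_map_map]
  refine ⟨ψ, ?_, ?_⟩
  · ext x
    constructor
    · rintro ⟨y, hy, rfl⟩
      exact (hmem y).2 hy
    · intro hx
      refine ⟨ψ.symm x, (hmem _).1 ?_, ψ.apply_symm_apply x⟩
      rw [ψ.apply_symm_apply]; exact hx
  · have hV : ∀ p, ψ (V (b p)) = V (ψ (b p)) := by
      rintro ⟨n, i⟩
      rw [hb, hψ, hψ, hc, hc, hb']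
    intro v
    have h1 := ((b.hasSum_repr v).mapL (V.trans ψ).toContinuousLinearEquiv.toContinuousLinearMap)
    have h2 := ((b.hasSum_repr v).mapL (ψ.trans V).toContinuousLinearEquiv.toContinuousLinearMap)
    have h3 : ∀ p, ψ (V (b.repr v p • b p)) = V (ψ (b.repr v p • b p)) := by
      intro p
      simp only [map_smul, hV]
    have h4 : HasSum (fun p => ψ (V (b.repr v p • b p))) (ψ (V v)) := h1
    simp only [h3] at h4
    exact h4.unique h2

end Discrete

section Final

variable {𝕜 : Type*} {E : Type u} [RCLike 𝕜] [NormedAddCommGroup E] [InnerProductSpace 𝕜 E]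
  [CompleteSpace E]

/-- A closed subspace reducing the cogenerator is invariant under the group. -/
theorem reducing_invariant (U : ℝ → (E ≃ₗᵢ[𝕜] E)) (V : E ≃ₗᵢ[𝕜] E)
    (hV : ∀ S : E →L[𝕜] E, (∀ y, S (V y) = V (S y)) → ∀ t y, S (U t y) = U t (S y))
    (F : Submodule 𝕜 E) (hF : IsClosed (F : Set E)) (h1 : ∀ x ∈ F, V x ∈ F)
    (h2 : ∀ x ∈ F, V⁻¹ x ∈ F) (t : ℝ) (x : E) (hx : x ∈ F) : U t x ∈ F := by
  have : CompleteSpace F := hF.completeSpace_coe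
  have hc : ∀ y, F.starProjection (V y) = V (F.starProjection y) := by
    intro y
    refine Submodule.eq_starProjection_of_mem_of_inner_eq_zero
      (h1 _ (Submodule.starProjection_apply_mem F y)) fun w hw => ?_
    have hw' : w = V (V⁻¹ w) := (V.apply_symm_apply w).symm
    rw [← map_sub, hw', V.inner_map_map]
    exact Submodule.starProjection_inner_eq_zero _ _ (h2 w hw)
  have h := hV F.starProjection hc t x
  rw [Submodule.starProjection_eq_self_iff.2 hx] at h
  exact Submodule.starProjection_eq_self_iff.1 h

theorem ropg_shift_basis (U : ℝ → (E ≃ₗᵢ[𝕜] E)) (V : E ≃ₗᵢ[𝕜] E)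
    (hU0 : ∀ v : E, U 0 v = v)
    (hUadd : ∀ s t : ℝ, ∀ v : E, U (s + t) v = U s (U t v))
    (hV : ∀ S : E →L[𝕜] E, (∀ y, S (V y) = V (S y)) → ∀ t y, S (U t y) = U t (S y))
    (K : Submodule 𝕜 E) (hK : IsClosed (K : Set E)) (hVK : ∀ v ∈ K, V v ∈ K)
    (hR : IsROPG K U) :
    ∃ (ι : Type u) (b : HilbertBasis (ℤ × ι) 𝕜 E),
      (∀ n i, V (b (n, i)) = b (n + 1, i)) ∧
      ∀ x, x ∈ K ↔ ∀ n : ℤ, n < 0 → ∀ i, inner 𝕜 (b (n, i)) x = 0 := by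
  obtain ⟨-, hR2, hR3⟩ := hR
  have zadd : ∀ (m n : ℤ) x, (V ^ (m + n)) x = (V ^ m) ((V ^ n) x) := fun m n x => by
    rw [zpow_add]; rfl
  have zone : ∀ (n : ℤ) x, (V ^ n) (V x) = (V ^ (n + 1)) x := fun n x => by
    rw [zadd, zpow_one]
  have zinv : ∀ (n : ℤ) x, (V ^ n) (V⁻¹ x) = (V ^ (n - 1)) x := fun n x => by
    rw [sub_eq_add_neg, zadd, zpow_neg_one]
  apply exists_shift_basis V K hK hVK
  · intro x hx
    let F : Submodule 𝕜 E := ⨅ n : ℤ, K.comap ((V ^ n).toLinearEquiv : E →ₗ[𝕜] E)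
    have hF : ∀ y, y ∈ F ↔ ∀ n : ℤ, (V ^ n) y ∈ K := by
      intro y
      simp only [F, Submodule.mem_iInf]
      rfl
    have hFc : IsClosed (F : Set E) := by
      have : (F : Set E) = ⋂ n : ℤ, (V ^ n) ⁻¹' (K : Set E) := by
        ext y
        simp only [Set.mem_iInter]
        exact hF y
      rw [this]
      exact isClosed_iInter fun n => hK.preimage (V ^ n).continuous
    have hinv := reducing_invariant U V hV F hFc
      (fun y hy => (hF _).2 fun n => by rw [zone]; exact (hF y).1 hy _)
      (fun y hy => (hF _).2 fun n => by rw [zinv]; exact (hF y).1 hy _)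
    have : x ∈ ⋂ t : ℝ, (U t) '' (K : Set E) := by
      rw [Set.mem_iInter]
      intro t
      refine ⟨U (-t) x, ?_, ?_⟩
      · have h := (hF _).1 (hinv (-t) x ((hF x).2 hx)) 0
        simpa using h
      · rw [← hUadd, add_neg_cancel, hU0]
    rw [hR2] at this
    exact this
  · intro z hz
    let F : Submodule 𝕜 E := (Submodule.span 𝕜 (⋃ n : ℤ, (V ^ n) '' (K : Set E)))ᗮ
    have hF : ∀ y, y ∈ F ↔ ∀ n : ℤ, ∀ k ∈ K, inner 𝕜 ((V ^ n) k) y = 0 := by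
      intro y
      constructor
      · intro hy n k hk
        exact (Submodule.mem_orthogonal _ _).1 hy _
          (Submodule.subset_span (Set.mem_iUnion.2 ⟨n, k, hk, rfl⟩))
      · intro h
        refine (Submodule.mem_orthogonal _ _).2 fun u hu => ?_
        induction hu using Submodule.span_induction with
        | mem u hu =>
          obtain ⟨n, k, hk, rfl⟩ := Set.mem_iUnion.1 hu
          exact h n k hk
        | zero => exact inner_zero_left _
        | add u v _ _ hu hv => rw [inner_add_left, hu, hv, add_zero]
        | smul c u _ hu => rw [inner_smul_left, hu, mul_zero]
    have hFc : IsClosed (F : Set E) := Submodule.isClosed_orthogonal _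
    have hinv := reducing_invariant U V hV F hFc
      (fun y hy => (hF _).2 fun n k hk => by
        have h : (V ^ n) k = V ((V ^ (n - 1)) k) := by
          have := zadd 1 (n - 1) k
          rw [add_sub_cancel, zpow_one] at this
          exact this
        rw [h, V.inner_map_map]
        exact (hF y).1 hy _ _ hk)
      (fun y hy => (hF _).2 fun n k hk => by
        have h : (V ^ n) k = V⁻¹ ((V ^ (n + 1)) k) := by
          have := zadd (-1) (n + 1) k
          rw [neg_add_cancel_comm_assoc, zpow_neg_one] at this
          exact this
        rw [h, (V⁻¹).inner_map_map]
        exact (hF y).1 hy _ _ hk)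
    have h0 : ∀ u ∈ ⋃ t : ℝ, (U t) '' (K : Set E), inner 𝕜 u z = 0 := by
      intro u hu
      obtain ⟨t, k, hk, rfl⟩ := Set.mem_iUnion.1 hu
      have h := (hF _).1 (hinv (-t) z ((hF z).2 hz)) 0 k hk
      rw [← (U t).inner_map_map, ← hUadd, add_neg_cancel, hU0] at h
      simpa using h
    have h1 : (fun u => inner 𝕜 u z) = fun _ => (0 : 𝕜) :=
      Continuous.ext_on hR3 (by fun_prop) continuous_const h0
    exact inner_self_eq_zero.1 (congrFun h1 z)

end Final

/-- **Uniqueness of the positive subspace of a regular one-parameter group.**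
If `(E, E₊, U)` and `(E, E₊', U)` are both regular one-parameter groups (for the same
strongly continuous unitary one-parameter group `U` on the real or complex Hilbert
space `E`), then they are equivalent: there is a unitary `ψ : E → E` with
`ψ(E₊) = E₊'` and `ψ ∘ U_t = U_t ∘ ψ` for all `t ∈ ℝ`. -/
theorem ROPG_independent_of_subspace {𝕜 E : Type*} [RCLike 𝕜] [NormedAddCommGroup E]
    [InnerProductSpace 𝕜 E] [CompleteSpace E]
    (U : ℝ → (E ≃ₗᵢ[𝕜] E))
    (hU0 : ∀ v : E, U 0 v = v)
    (hUadd : ∀ s t : ℝ, ∀ v : E, U (s + t) v = U s (U t v))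
    (hUcont : ∀ v : E, Continuous fun t : ℝ => U t v)
    (Ep Ep' : Submodule 𝕜 E)
    (hEp : IsClosed (Ep : Set E)) (hEp' : IsClosed (Ep' : Set E))
    (hR : IsROPG Ep U) (hR' : IsROPG Ep' U) :
    ∃ ψ : E ≃ₗᵢ[𝕜] E, ψ '' (Ep : Set E) = (Ep' : Set E) ∧
      ∀ t : ℝ, ∀ v : E, ψ (U t v) = U t (ψ v) := by
  obtain ⟨V, hV, hVK⟩ := exists_cogenerator U hU0 hUadd hUcont
  obtain ⟨ι, b, hb, hbK⟩ := ropg_shift_basis U V hU0 hUadd hV Ep hEp (hVK Ep hEp hR.1) hR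
  obtain ⟨κ, b', hb', hbK'⟩ := ropg_shift_basis U V hU0 hUadd hV Ep' hEp' (hVK Ep' hEp' hR'.1) hR'
  obtain ⟨ψ, h1, h2⟩ := exists_intertwiner V Ep Ep' b b' hb hb' hbK hbK'
  exact ⟨ψ, h1, hV ψ.toContinuousLinearEquiv.toContinuousLinearMap h2⟩
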